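/- arXiv:nlin/0604070 — 3 statements merged into one kernel-verified Lean document; each statement's English description precedes it below -/
import Mathlib

section
/- Fix N ≥ 1 and natural numbers m ≤ r ≤ n. For each multi-index J with |J| ≤ r set K_J := (n−|J| − E)_{r−|J|} ∘ D_J. Then an operator L[f] = Σ_{|I| ≤ r} a_I(x)·D_I f with polynomial coefficients a_I ∈ ℝ[x_1,…,x_N] maps every polynomial of total degree at most n to a polynomial of total degree at most n − m if and only if it can be written as L[f] = Σ_{|J| ≤ r} p_J(x)·K_J[f] with polynomials p_J of total degree at most r − m, and in that case the p_J are uniquely determined. Consequently, the ℝ-vector space of linear differential operators with polynomial coefficients of order at most r mapping P_n^N into P_{n−m}^N has dimension C(N+r−m, r−m)·C(N+r, r). -/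
open MvPolynomial

/-- The weight `|J| = j_1 + ⋯ + j_N` of a multi-index. -/
def mwt {N : ℕ} (J : Fin N → ℕ) : ℕ := ∑ i, J i

/-- The monomial `x^I = x_1^{i_1} ⋯ x_N^{i_N}`. -/
noncomputable def xPow {N : ℕ} (I : Fin N → ℕ) : MvPolynomial (Fin N) ℝ :=
  ∏ i, (X i : MvPolynomial (Fin N) ℝ) ^ I i

/-- The differential operator `D_J = ∂_{x_1}^{j_1} ⋯ ∂_{x_N}^{j_N}`. -/
noncomputable def DJ {N : ℕ} (J : Fin N → ℕ) :
    MvPolynomial (Fin N) ℝ →ₗ[ℝ] MvPolynomial (Fin N) ℝ :=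
  (((List.finRange N).map fun i =>
    (((pderiv i : Derivation ℝ (MvPolynomial (Fin N) ℝ) (MvPolynomial (Fin N) ℝ)).toLinearMap :
      Module.End ℝ (MvPolynomial (Fin N) ℝ)) ^ (J i))).prod)

/-- The Euler operator `E = ∑ x_i ∂_{x_i}`. -/
noncomputable def Euler (N : ℕ) : MvPolynomial (Fin N) ℝ →ₗ[ℝ] MvPolynomial (Fin N) ℝ :=
  ∑ i : Fin N, (LinearMap.mulLeft ℝ (X i : MvPolynomial (Fin N) ℝ)).comp
    (pderiv i : Derivation ℝ (MvPolynomial (Fin N) ℝ) (MvPolynomial (Fin N) ℝ)).toLinearMap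

/-- The Pochhammer operator `(a − E)_k = (a − E)∘((a−1) − E)∘⋯∘((a−k+1) − E)`,
the identity when `k = 0`. -/
noncomputable def pochE (N : ℕ) (a : ℤ) :
    ℕ → (MvPolynomial (Fin N) ℝ →ₗ[ℝ] MvPolynomial (Fin N) ℝ)
  | 0 => LinearMap.id
  | k + 1 => ((a : ℝ) • (LinearMap.id : MvPolynomial (Fin N) ℝ →ₗ[ℝ] MvPolynomial (Fin N) ℝ)
      - Euler N).comp (pochE N (a - 1) k)

/-- The finite set of multi-indices `J ∈ ℕ^N` with `|J| ≤ r`. -/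
def multiIdx (N r : ℕ) : Finset (Fin N → ℕ) :=
  (Fintype.piFinset fun _ : Fin N => Finset.range (r + 1)).filter fun I => ∑ i, I i ≤ r

/-- The maximal deficiency operator `K_J = (n−|J|−E)_{r−|J|} ∘ D_J`. -/
noncomputable def KJ (N n r : ℕ) (J : Fin N → ℕ) :
    MvPolynomial (Fin N) ℝ →ₗ[ℝ] MvPolynomial (Fin N) ℝ :=
  (pochE N ((n : ℤ) - mwt J) (r - mwt J)).comp (DJ J)

section MultiIndices

variable {N : ℕ}

/-- A multi-index as an exponent vector. -/
noncomputable def toExp (J : Fin N → ℕ) : Fin N →₀ ℕ := Finsupp.equivFunOnFinite.symm J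

@[simp] lemma toExp_apply (J : Fin N → ℕ) (i : Fin N) : toExp J i = J i := rfl

lemma degree_toExp (J : Fin N → ℕ) : (toExp J).degree = mwt J := by
  simp [Finsupp.degree_eq_sum, mwt]

lemma mem_multiIdx {r : ℕ} {J : Fin N → ℕ} : J ∈ multiIdx N r ↔ mwt J ≤ r := by
  simp only [multiIdx, Finset.mem_filter, Fintype.mem_piFinset, Finset.mem_range, mwt,
    and_iff_right_iff_imp]
  intro h i
  exact Nat.lt_succ_of_le ((Finset.single_le_sum (fun _ _ => Nat.zero_le _)
    (Finset.mem_univ i)).trans h)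

lemma mwt_add_single (J : Fin N → ℕ) (i : Fin N) (k : ℕ) :
    mwt (J + Pi.single i k) = mwt J + k := by
  simp [mwt, Finset.sum_add_distrib]

lemma card_degree_le (N r : ℕ) :
    Nat.card {d : Fin N →₀ ℕ | d.degree ≤ r} = (N + r).choose r := by
  have h : {d : Fin N →₀ ℕ | d.degree ≤ r} =
      ((Finset.range (r + 1)).biUnion fun s =>
        (Finset.univ : Finset (Fin N)).finsuppAntidiag s : Finset (Fin N →₀ ℕ)) := by
    ext d
    simp [Finset.mem_finsuppAntidiag, Finsupp.degree_eq_sum]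
  rw [h, Nat.card_coe_set_eq, Set.ncard_coe_finset, Finset.card_biUnion]
  · simp only [Finset.card_finsuppAntidiag_nat_eq_multichoose, Finset.card_univ, Fintype.card_fin]
    rw [Nat.sum_range_multichoose, Nat.add_comm, Nat.choose_symm_add]
  · intro s _ t _ hst
    refine Finset.disjoint_left.2 fun d hs ht => ?_
    rw [Finset.mem_finsuppAntidiag] at hs ht
    exact hst (hs.1.symm.trans ht.1)

lemma card_multiIdx (N r : ℕ) : (multiIdx N r).card = (N + r).choose r := by
  rw [← card_degree_le, ← Nat.card_eq_finsetCard]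
  refine Nat.card_congr (Finsupp.equivFunOnFinite.symm.subtypeEquiv fun J => ?_)
  rw [mem_multiIdx, ← degree_toExp]
  rfl

lemma finrank_restrictTotalDegree (N k : ℕ) :
    Module.finrank ℝ (restrictTotalDegree (Fin N) ℝ k) = (N + k).choose k := by
  rw [← card_degree_le]
  exact Module.finrank_eq_nat_card_basis (basisRestrictSupport ℝ _)

end MultiIndices

section Monomials

variable {N : ℕ}

lemma pderiv_pow_monomial (i : Fin N) (k : ℕ) (s : Fin N →₀ ℕ) (c : ℝ) :
    (((pderiv i : Derivation ℝ (MvPolynomial (Fin N) ℝ) (MvPolynomial (Fin N) ℝ)).toLinearMap :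
      Module.End ℝ (MvPolynomial (Fin N) ℝ)) ^ k) (monomial s c)
      = monomial (s - Finsupp.single i k) (c * (s i).descFactorial k) := by
  induction k with
  | zero => simp
  | succ k ih =>
    rw [pow_succ', Module.End.mul_apply, ih, Derivation.coeFn_coe, pderiv_monomial,
      Nat.descFactorial_succ]
    congr 1
    · rw [tsub_tsub, ← Finsupp.single_add]
    · simp
      ring

lemma list_prod_pderiv_monomial (J : Fin N → ℕ) (l : List (Fin N)) (hl : l.Nodup)
    (s : Fin N →₀ ℕ) (c : ℝ) :
    ((l.map fun i =>
      (((pderiv i : Derivation ℝ (MvPolynomial (Fin N) ℝ) (MvPolynomial (Fin N) ℝ)).toLinearMap :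
        Module.End ℝ (MvPolynomial (Fin N) ℝ)) ^ (J i))).prod) (monomial s c)
      = monomial (s - (l.map fun i => Finsupp.single i (J i)).sum)
          (c * (l.map fun i => ((s i).descFactorial (J i) : ℝ)).prod) := by
  induction l with
  | nil => simp
  | cons i l ih =>
    rw [List.nodup_cons] at hl
    have hi : (l.map fun j => Finsupp.single j (J j)).sum i = 0 := by
      have := List.sum_map_hom l (fun j => Finsupp.single j (J j)) (Finsupp.applyAddHom (M := ℕ) i)
      rw [Finsupp.applyAddHom_apply] at this
      rw [← this]
      apply List.sum_eq_zero
      intro x hx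
      obtain ⟨j, hj, rfl⟩ := List.mem_map.1 hx
      simp only [Function.comp, Finsupp.applyAddHom_apply]
      exact Finsupp.single_eq_of_ne (by rintro rfl; exact hl.1 hj)
    simp only [List.map_cons, List.prod_cons, List.sum_cons]
    rw [Module.End.mul_apply, ih hl.2, pderiv_pow_monomial]
    congr 1
    · rw [tsub_tsub, add_comm]
    · rw [Finsupp.tsub_apply, hi, tsub_zero]
      ring

lemma DJ_monomial (J : Fin N → ℕ) (s : Fin N →₀ ℕ) (c : ℝ) :
    DJ J (monomial s c)
      = monomial (s - toExp J) (c * ∏ i, ((s i).descFactorial (J i) : ℝ)) := by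
  rw [DJ, list_prod_pderiv_monomial J _ (List.nodup_finRange N)]
  rw [← List.ofFn_eq_map, ← List.ofFn_eq_map, List.sum_ofFn, List.prod_ofFn]
  congr 2
  ext i
  simp [Finsupp.single_apply]

lemma prod_descFactorial_eq_zero {J : Fin N → ℕ} {s : Fin N →₀ ℕ} (h : ¬ toExp J ≤ s) :
    ∏ i, ((s i).descFactorial (J i) : ℝ) = 0 := by
  simp only [Finsupp.le_def, not_forall, toExp_apply, not_le] at h
  obtain ⟨i, hi⟩ := h
  exact Finset.prod_eq_zero (Finset.mem_univ i) (by simp [hi])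

lemma Euler_monomial (s : Fin N →₀ ℕ) (c : ℝ) :
    Euler N (monomial s c) = (s.degree : ℝ) • monomial s c := by
  have h := (isHomogeneous_monomial (d := s) c rfl).sum_X_mul_pderiv
  simp only [Euler, LinearMap.sum_apply, LinearMap.comp_apply, LinearMap.mulLeft_apply,
    Derivation.coeFn_coe]
  rw [h, Nat.cast_smul_eq_nsmul]

lemma pochE_monomial (a : ℤ) (k : ℕ) (s : Fin N →₀ ℕ) (c : ℝ) :
    pochE N a k (monomial s c)
      = monomial s ((∏ j ∈ Finset.range k, ((a : ℝ) - j - s.degree)) * c) := by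
  induction k generalizing a with
  | zero => simp [pochE]
  | succ k ih =>
    rw [pochE, LinearMap.comp_apply, ih, LinearMap.sub_apply, LinearMap.smul_apply,
      LinearMap.id_apply, Euler_monomial, ← sub_smul, smul_monomial, Finset.prod_range_succ']
    congr 1
    push_cast
    simp only [smul_eq_mul, sub_zero, add_comm _ (1 : ℝ), sub_sub]
    ring

lemma KJ_monomial (n r : ℕ) (J : Fin N → ℕ) (s : Fin N →₀ ℕ) (c : ℝ) :
    KJ N n r J (monomial s c) = monomial (s - toExp J)
      ((∏ j ∈ Finset.range (r - mwt J), ((n : ℝ) - s.degree - j)) *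
        (c * ∏ i, ((s i).descFactorial (J i) : ℝ))) := by
  rw [KJ, LinearMap.comp_apply, DJ_monomial, pochE_monomial]
  by_cases h : toExp J ≤ s
  · congr 2
    refine Finset.prod_congr rfl fun j _ => ?_
    have : s.degree = (s - toExp J).degree + mwt J := by
      rw [← degree_toExp, ← map_add, tsub_add_cancel_of_le h]
    rw [this]
    push_cast
    ring
  · simp [prod_descFactorial_eq_zero h]

end Monomials

section Operators

variable {N : ℕ}

lemma pderiv_DJ (i : Fin N) (J : Fin N → ℕ) (f : MvPolynomial (Fin N) ℝ) :
    pderiv i (DJ J f) = DJ (J + Pi.single i 1) f := by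
  induction f using MvPolynomial.induction_on' with
  | add p q hp hq => simp only [map_add, hp, hq]
  | monomial s c =>
    rw [DJ_monomial, DJ_monomial, pderiv_monomial]
    have hexp : toExp (J + Pi.single i 1) = toExp J + Finsupp.single i 1 := by
      ext j
      simp [Finsupp.single_apply, Pi.single_apply, eq_comm]
    rw [hexp, tsub_tsub, mul_assoc]
    congr 2
    rw [← Finset.mul_prod_erase _ _ (Finset.mem_univ i)]
    refine Eq.trans ?_ (Finset.mul_prod_erase _
      (fun j => ((s j).descFactorial ((J + Pi.single i 1 : Fin N → ℕ) j) : ℝ))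
      (Finset.mem_univ i))
    have hrest : ∏ j ∈ Finset.univ.erase i,
        ((s j).descFactorial ((J + Pi.single i 1 : Fin N → ℕ) j) : ℝ)
        = ∏ j ∈ Finset.univ.erase i, ((s j).descFactorial (J j) : ℝ) := by
      refine Finset.prod_congr rfl fun j hj => ?_
      simp [Finset.ne_of_mem_erase hj]
    rw [hrest]
    simp only [Pi.add_apply, Pi.single_eq_same, Nat.descFactorial_succ, Finsupp.tsub_apply,
      toExp_apply, Nat.cast_mul]
    ring

/-- The module of operators spanned over the polynomials by the `D_I` with `j ≤ |I| ≤ k`. -/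
noncomputable def diffOps (N j k : ℕ) : Submodule (MvPolynomial (Fin N) ℝ)
    (MvPolynomial (Fin N) ℝ →ₗ[ℝ] MvPolynomial (Fin N) ℝ) :=
  Submodule.span _ (DJ '' {I | j ≤ mwt I ∧ mwt I ≤ k})

lemma DJ_mem_diffOps {j k : ℕ} {I : Fin N → ℕ} (hj : j ≤ mwt I) (hk : mwt I ≤ k) :
    DJ I ∈ diffOps N j k :=
  Submodule.subset_span ⟨I, ⟨hj, hk⟩, rfl⟩

lemma diffOps_mono {j j' k k' : ℕ} (hj : j' ≤ j) (hk : k ≤ k') :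
    diffOps N j k ≤ diffOps N j' k' :=
  Submodule.span_mono (Set.image_mono fun _ h => ⟨hj.trans h.1, h.2.trans hk⟩)

lemma Euler_comp_smul (f : MvPolynomial (Fin N) ℝ)
    (T : MvPolynomial (Fin N) ℝ →ₗ[ℝ] MvPolynomial (Fin N) ℝ) :
    (Euler N).comp (f • T) = Euler N f • T + f • (Euler N).comp T := by
  refine LinearMap.ext fun g => ?_
  simp only [Euler, LinearMap.comp_apply, LinearMap.add_apply, LinearMap.smul_apply,
    LinearMap.sum_apply, LinearMap.mulLeft_apply, Derivation.coeFn_coe, smul_eq_mul,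
    Derivation.leibniz, Finset.sum_mul, Finset.mul_sum, ← Finset.sum_add_distrib]
  refine Finset.sum_congr rfl fun i _ => ?_
  ring

lemma Euler_comp_DJ (J : Fin N → ℕ) :
    (Euler N).comp (DJ J)
      = ∑ i, (X i : MvPolynomial (Fin N) ℝ) • DJ (J + Pi.single i 1) := by
  refine LinearMap.ext fun g => ?_
  simp [Euler, pderiv_DJ, LinearMap.sum_apply]

lemma Euler_comp_DJ_mem (J : Fin N → ℕ) :
    (Euler N).comp (DJ J) ∈ diffOps N (mwt J + 1) (mwt J + 1) := by
  rw [Euler_comp_DJ]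
  refine Submodule.sum_mem _ fun i _ => Submodule.smul_mem _ _ (DJ_mem_diffOps ?_ ?_) <;>
  rw [mwt_add_single]

lemma Euler_comp_mem_diffOps {j k : ℕ}
    {T : MvPolynomial (Fin N) ℝ →ₗ[ℝ] MvPolynomial (Fin N) ℝ} (hT : T ∈ diffOps N j k) :
    (Euler N).comp T ∈ diffOps N j (k + 1) := by
  induction hT using Submodule.span_induction with
  | mem T h =>
    obtain ⟨I, ⟨h1, h2⟩, rfl⟩ := h
    exact diffOps_mono (by lia) (by lia) (Euler_comp_DJ_mem I)
  | zero => rw [LinearMap.comp_zero]; exact Submodule.zero_mem _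
  | add S T _ _ hS hT => rw [LinearMap.comp_add]; exact Submodule.add_mem _ hS hT
  | smul f T hT h =>
    rw [Euler_comp_smul]
    exact Submodule.add_mem _ (Submodule.smul_mem _ _ (diffOps_mono le_rfl k.le_succ hT))
      (Submodule.smul_mem _ _ h)

lemma real_smul_mem_diffOps {j k : ℕ} (c : ℝ)
    {T : MvPolynomial (Fin N) ℝ →ₗ[ℝ] MvPolynomial (Fin N) ℝ} (hT : T ∈ diffOps N j k) :
    c • T ∈ diffOps N j k := by
  rw [← algebraMap_smul (MvPolynomial (Fin N) ℝ) c T]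
  exact Submodule.smul_mem _ _ hT

/-- The leading term of `(a − E)_k ∘ D_J` is a multiple of `D_J`. -/
lemma pochE_comp_DJ_sub_mem (J : Fin N → ℕ) (a : ℤ) (k : ℕ) :
    (pochE N a k).comp (DJ J) - (∏ j ∈ Finset.range k, ((a : ℝ) - j)) • DJ J
      ∈ diffOps N (mwt J + 1) (mwt J + k) := by
  induction k generalizing a with
  | zero => simp [pochE, LinearMap.id_comp]
  | succ k ih =>
    have h := ih (a - 1)
    set c := ∏ j ∈ Finset.range k, (((a - 1 : ℤ) : ℝ) - j) with hc
    set T := (pochE N (a - 1) k).comp (DJ J) - c • DJ J with hTdef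
    have hprod : ∏ j ∈ Finset.range (k + 1), ((a : ℝ) - j) = a * c := by
      rw [Finset.prod_range_succ', hc, mul_comm]
      push_cast
      simp only [sub_zero, add_comm _ (1 : ℝ), sub_sub]
    have key : (pochE N a (k + 1)).comp (DJ J) - ((a : ℝ) * c) • DJ J
        = (a : ℝ) • T - (Euler N).comp T - c • (Euler N).comp (DJ J) := by
      rw [pochE, hTdef, LinearMap.comp_assoc, LinearMap.sub_comp, LinearMap.smul_comp,
        LinearMap.id_comp, LinearMap.comp_sub, LinearMap.comp_smul, smul_sub, mul_smul]
      abel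
    rw [hprod, key]
    refine Submodule.sub_mem _ (Submodule.sub_mem _ ?_ ?_) ?_
    · exact real_smul_mem_diffOps _ (diffOps_mono le_rfl (by lia) h)
    · exact Euler_comp_mem_diffOps h
    · exact real_smul_mem_diffOps _ (diffOps_mono le_rfl (by lia) (Euler_comp_DJ_mem J))

variable {n r : ℕ}

lemma KJ_mem_diffOps {J : Fin N → ℕ} (hJ : mwt J ≤ r) : KJ N n r J ∈ diffOps N 0 r := by
  have h := pochE_comp_DJ_sub_mem J ((n : ℤ) - mwt J) (r - mwt J)
  rw [← sub_add_cancel (KJ N n r J)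
    ((∏ j ∈ Finset.range (r - mwt J), ((((n : ℤ) - mwt J : ℤ) : ℝ) - j)) • DJ J)]
  exact Submodule.add_mem _ (diffOps_mono (Nat.zero_le _) (by lia) h)
    (real_smul_mem_diffOps _ (DJ_mem_diffOps (Nat.zero_le _) hJ))

lemma DJ_mem_span_KJ (hrn : r ≤ n) (J : Fin N → ℕ) (hJ : mwt J ≤ r) :
    DJ J ∈ Submodule.span (MvPolynomial (Fin N) ℝ) (KJ N n r '' (multiIdx N r : Set _)) := by
  induction hk : r - mwt J using Nat.strong_induction_on generalizing J with
  | _ k ih =>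
    have h := pochE_comp_DJ_sub_mem J ((n : ℤ) - mwt J) (r - mwt J)
    set c := ∏ j ∈ Finset.range (r - mwt J), ((((n : ℤ) - mwt J : ℤ) : ℝ) - j) with hc
    have hc0 : c ≠ 0 := by
      refine Finset.prod_ne_zero_iff.2 fun j hj => ?_
      rw [Finset.mem_range] at hj
      have : ((n : ℤ) - mwt J - j : ℤ) ≠ 0 := by lia
      exact_mod_cast this
    have hle : diffOps N (mwt J + 1) (mwt J + (r - mwt J)) ≤
        Submodule.span (MvPolynomial (Fin N) ℝ) (KJ N n r '' (multiIdx N r : Set _)) := by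
      refine Submodule.span_le.2 ?_
      rintro _ ⟨I, ⟨h1, h2⟩, rfl⟩
      exact ih (r - mwt I) (by lia) I (by lia) rfl
    have hK : KJ N n r J ∈
        Submodule.span (MvPolynomial (Fin N) ℝ) (KJ N n r '' (multiIdx N r : Set _)) :=
      Submodule.subset_span ⟨J, mem_multiIdx.2 hJ, rfl⟩
    have hcD := Submodule.sub_mem _ hK (hle h)
    rw [KJ, sub_sub_cancel, ← algebraMap_smul (MvPolynomial (Fin N) ℝ) c (DJ J)] at hcD
    have := Submodule.smul_mem _ (algebraMap ℝ (MvPolynomial (Fin N) ℝ) c⁻¹) hcD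
    rwa [smul_smul, ← map_mul, inv_mul_cancel₀ hc0, map_one, one_smul] at this

lemma diffOps_zero_eq_span : diffOps N 0 r =
    Submodule.span (MvPolynomial (Fin N) ℝ) (DJ '' (multiIdx N r : Set _)) := by
  rw [diffOps]
  congr 2
  ext I
  simp [mem_multiIdx]

/-- For `r ≤ n`, the `K_J` and the `D_J` span the same module of operators. -/
lemma diffOps_eq_span_KJ (hrn : r ≤ n) : diffOps N 0 r =
    Submodule.span (MvPolynomial (Fin N) ℝ) (KJ N n r '' (multiIdx N r : Set _)) := by
  refine le_antisymm (Submodule.span_le.2 ?_) (Submodule.span_le.2 ?_)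
  · rintro _ ⟨I, ⟨-, h⟩, rfl⟩
    exact DJ_mem_span_KJ hrn I h
  · rintro _ ⟨I, h, rfl⟩
    exact KJ_mem_diffOps (mem_multiIdx.1 h)

lemma mem_diffOps_iff_exists_DJ {L : MvPolynomial (Fin N) ℝ →ₗ[ℝ] MvPolynomial (Fin N) ℝ} :
    L ∈ diffOps N 0 r ↔
      ∃ a : (Fin N → ℕ) → MvPolynomial (Fin N) ℝ, ∑ I ∈ multiIdx N r, a I • DJ I = L := by
  rw [diffOps_zero_eq_span, Submodule.mem_span_image_finset_iff_exists_fun']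

lemma mem_diffOps_iff_exists_KJ (hrn : r ≤ n)
    {L : MvPolynomial (Fin N) ℝ →ₗ[ℝ] MvPolynomial (Fin N) ℝ} :
    L ∈ diffOps N 0 r ↔
      ∃ p : (Fin N → ℕ) → MvPolynomial (Fin N) ℝ, ∑ J ∈ multiIdx N r, p J • KJ N n r J = L := by
  rw [diffOps_eq_span_KJ hrn, Submodule.mem_span_image_finset_iff_exists_fun']

end Operators

section Degrees

variable {N n r : ℕ}

/-- `K_J` lowers the degree bound `n` by `r`. -/
lemma totalDegree_KJ_le {J : Fin N → ℕ} (hJ : mwt J ≤ r) {f : MvPolynomial (Fin N) ℝ}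
    (hf : f.totalDegree ≤ n) : (KJ N n r J f).totalDegree ≤ n - r := by
  rw [f.as_sum, map_sum]
  refine totalDegree_finsetSum_le fun s hs => ?_
  have hsn : s.degree ≤ n := (le_totalDegree hs).trans hf
  rw [KJ_monomial]
  by_cases h : toExp J ≤ s
  · have hdeg : s.degree = (s - toExp J).degree + mwt J := by
      rw [← degree_toExp, ← map_add, tsub_add_cancel_of_le h]
    by_cases hlt : n - s.degree < r - mwt J
    · rw [Finset.prod_eq_zero (Finset.mem_range.2 hlt) (by rw [Nat.cast_sub hsn]; ring)]
      simp
    · refine (totalDegree_monomial_le _ _).trans ?_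
      change (s - toExp J).degree ≤ n - r
      lia
  · simp [prod_descFactorial_eq_zero h]

/-- Operators of order at most `r` taking degree at most `n` to degree at most `n - m` have
`K`-coefficients of degree at most `r - m`. -/
lemma totalDegree_coeff_le {m : ℕ} (hN : 1 ≤ N) (hm : m ≤ r) (hrn : r ≤ n)
    (p : (Fin N → ℕ) → MvPolynomial (Fin N) ℝ)
    (hL : ∀ f : MvPolynomial (Fin N) ℝ, f.totalDegree ≤ n →
      (∑ J ∈ multiIdx N r, p J * KJ N n r J f).totalDegree ≤ n - m)
    (M : Fin N → ℕ) (hM : mwt M ≤ r) : (p M).totalDegree ≤ r - m := by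
  set e : Fin N := ⟨0, hN⟩
  have split (J : Fin N → ℕ) : mwt J = J e + ∑ i ∈ Finset.univ.erase e, J i :=
    (Finset.add_sum_erase _ _ (Finset.mem_univ e)).symm
  induction hk : (∑ i ∈ Finset.univ.erase e, M i) * (r + 1) + (r - M e)
    using Nat.strong_induction_on generalizing M with
  | _ k ih =>
    set s : Fin N →₀ ℕ := toExp M + Finsupp.single e (n - r) with hs
    have hsdeg : s.degree = mwt M + (n - r) := by
      rw [hs, map_add, degree_toExp, Finsupp.degree_single]
    have hf : (monomial s (1 : ℝ)).totalDegree ≤ n := by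
      rw [totalDegree_monomial _ one_ne_zero]
      change s.degree ≤ n
      lia
    have htot := hL _ hf
    rw [← Finset.add_sum_erase _ _ (mem_multiIdx.2 hM)] at htot
    have hothers : (∑ J ∈ (multiIdx N r).erase M,
        p J * KJ N n r J (monomial s 1)).totalDegree ≤ n - m := by
      refine totalDegree_finsetSum_le fun J hJ => ?_
      obtain ⟨hne, hJr⟩ := Finset.mem_erase.1 hJ
      rw [mem_multiIdx] at hJr
      by_cases h : toExp J ≤ s
      · by_cases hlt : mwt J < mwt M
        · have : KJ N n r J (monomial s 1) = 0 := by
            rw [KJ_monomial, Finset.prod_eq_zero (i := r - mwt M) (Finset.mem_range.2 (by lia))]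
            · simp
            · rw [hsdeg, Nat.cast_add, Nat.cast_sub hM, Nat.cast_sub hrn]
              ring
          simp [this]
        · have hle : ∀ i ∈ Finset.univ.erase e, J i ≤ M i := by
            intro i hi
            have := h i
            simpa [hs, Finsupp.single_apply, (Finset.ne_of_mem_erase hi).symm] using this
          have hsum := Finset.sum_le_sum hle
          have hdec : (∑ i ∈ Finset.univ.erase e, J i) * (r + 1) + (r - J e) < k := by
            rcases hsum.lt_or_eq with hlt' | heq
            · rw [← hk]
              have := Nat.mul_le_mul_right (r + 1) (Nat.succ_le_of_lt hlt')
              rw [Nat.succ_mul] at this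
              lia
            · have hall := (Finset.sum_eq_sum_iff_of_le hle).1 heq
              have hJM : J e ≠ M e := fun h0 => hne <| funext fun i => by
                by_cases hi : i = e
                · rw [hi, h0]
                · exact hall i (by simp [hi])
              have h1 := split J
              have h2 := split M
              rw [← hk, heq]
              lia
          have hp := ih _ hdec J hJr rfl
          have hK := totalDegree_KJ_le hJr hf
          have := totalDegree_mul (p J) (KJ N n r J (monomial s 1))
          lia
      · rw [KJ_monomial, prod_descFactorial_eq_zero h]
        simp
    have hmain : (p M * KJ N n r M (monomial s 1)).totalDegree ≤ n - m := by
      have := totalDegree_sub (p M * KJ N n r M (monomial s 1) + ∑ J ∈ (multiIdx N r).erase M,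
        p J * KJ N n r J (monomial s 1)) (∑ J ∈ (multiIdx N r).erase M,
        p J * KJ N n r J (monomial s 1))
      rw [add_sub_cancel_right] at this
      exact this.trans (max_le htot hothers)
    rcases eq_or_ne (p M) 0 with h0 | h0
    · simp [h0]
    have hc : (∏ j ∈ Finset.range (r - mwt M), ((n : ℝ) - s.degree - j)) *
        (1 * ∏ i, ((s i).descFactorial (M i) : ℝ)) ≠ 0 := by
      refine mul_ne_zero (Finset.prod_ne_zero_iff.2 fun j hj => ?_)
        (mul_ne_zero one_ne_zero (Finset.prod_ne_zero_iff.2 fun i _ => ?_))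
      · rw [Finset.mem_range] at hj
        have : ((n : ℤ) - s.degree - j : ℤ) ≠ 0 := by lia
        exact_mod_cast this
      · rw [Nat.cast_ne_zero, ne_eq, Nat.descFactorial_eq_zero_iff_lt, hs]
        simp
    rw [KJ_monomial, totalDegree_mul_of_isDomain h0 (by rwa [ne_eq, monomial_eq_zero]),
      totalDegree_monomial _ hc] at hmain
    have hdeg : (s - toExp M).sum (fun _ e => e) = n - r := by
      change (s - toExp M).degree = n - r
      rw [hs, add_tsub_cancel_left, Finsupp.degree_single]
    lia

/-- The `K_J` with `|J| ≤ r` are linearly independent over the polynomials. -/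
lemma coeff_eq_zero (hN : 1 ≤ N) (hrn : r ≤ n)
    (p : (Fin N → ℕ) → MvPolynomial (Fin N) ℝ)
    (hp : ∀ f : MvPolynomial (Fin N) ℝ, ∑ J ∈ multiIdx N r, p J * KJ N n r J f = 0)
    (M : Fin N → ℕ) (hM : mwt M ≤ r) : p M = 0 := by
  by_contra h0
  set q : MvPolynomial (Fin N) ℝ := X ⟨0, hN⟩ ^ (r + 1)
  have h := totalDegree_coeff_le (m := 0) hN (Nat.zero_le _) hrn (fun J => q * p J)
    (fun f _ => by simp [mul_assoc, ← Finset.mul_sum, hp f]) M hM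
  rw [totalDegree_mul_of_isDomain (pow_ne_zero _ (X_ne_zero _)) h0, totalDegree_X_pow] at h
  lia

end Degrees

section Dimension

variable {N n r : ℕ}

/-- The operator `∑ p_J K_J` attached to coefficients `p_J` of degree at most `k`. -/
noncomputable def ofCoeffs (N n r k : ℕ) :
    (multiIdx N r → restrictTotalDegree (Fin N) ℝ k) →ₗ[ℝ]
      (MvPolynomial (Fin N) ℝ →ₗ[ℝ] MvPolynomial (Fin N) ℝ) where
  toFun p := ∑ J, (p J : MvPolynomial (Fin N) ℝ) • KJ N n r J
  map_add' p q := by simp [add_smul, Finset.sum_add_distrib]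
  map_smul' c p := by simp [Finset.smul_sum]

lemma ofCoeffs_apply (k : ℕ) (p : multiIdx N r → restrictTotalDegree (Fin N) ℝ k) :
    ofCoeffs N n r k p = ∑ J, (p J : MvPolynomial (Fin N) ℝ) • KJ N n r J := rfl

lemma coeff_unique (hN : 1 ≤ N) (hrn : r ≤ n) (p q : multiIdx N r → MvPolynomial (Fin N) ℝ)
    (h : ∀ f : MvPolynomial (Fin N) ℝ,
      ∑ J, p J * KJ N n r J f = ∑ J, q J * KJ N n r J f) : p = q := by
  funext M
  have hinj := Subtype.val_injective (p := fun J => J ∈ multiIdx N r)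
  have h0 := coeff_eq_zero hN hrn (Function.extend Subtype.val (p - q) 0) (fun f => by
    rw [← Finset.sum_coe_sort]
    simp only [hinj.extend_apply, Pi.sub_apply, sub_mul, Finset.sum_sub_distrib, h f, sub_self])
    M (mem_multiIdx.1 M.2)
  rw [hinj.extend_apply, Pi.sub_apply] at h0
  exact sub_eq_zero.1 h0

lemma ofCoeffs_injective (hN : 1 ≤ N) (hrn : r ≤ n) (k : ℕ) :
    Function.Injective (ofCoeffs N n r k) := by
  intro p q h
  have hpq := coeff_unique hN hrn (fun J => (p J : MvPolynomial (Fin N) ℝ)) (fun J => q J)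
    fun f => by simpa [ofCoeffs_apply, LinearMap.sum_apply] using LinearMap.congr_fun h f
  funext J
  exact Subtype.ext (congrFun hpq J)

lemma totalDegree_sum_KJ_le {m : ℕ} (hm : m ≤ r) (hrn : r ≤ n)
    (p : (Fin N → ℕ) → MvPolynomial (Fin N) ℝ)
    (hp : ∀ J ∈ multiIdx N r, (p J).totalDegree ≤ r - m)
    {f : MvPolynomial (Fin N) ℝ} (hf : f.totalDegree ≤ n) :
    (∑ J ∈ multiIdx N r, p J * KJ N n r J f).totalDegree ≤ n - m := by
  refine totalDegree_finsetSum_le fun J hJ => ?_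
  have h1 := totalDegree_mul (p J) (KJ N n r J f)
  have h2 := hp J hJ
  have h3 := totalDegree_KJ_le (mem_multiIdx.1 hJ) hf
  lia

/-- Operators of order at most `r` taking degree at most `n` to degree at most `n - m` are exactly
the combinations of the `K_J` with coefficients of degree at most `r - m`. -/
lemma mem_diffOps_and_totalDegree_iff {m : ℕ} (hN : 1 ≤ N) (hm : m ≤ r) (hrn : r ≤ n)
    (L : MvPolynomial (Fin N) ℝ →ₗ[ℝ] MvPolynomial (Fin N) ℝ) :
    (L ∈ diffOps N 0 r ∧
      ∀ f : MvPolynomial (Fin N) ℝ, f.totalDegree ≤ n → (L f).totalDegree ≤ n - m) ↔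
    ∃ p : (Fin N → ℕ) → MvPolynomial (Fin N) ℝ,
      (∀ J ∈ multiIdx N r, (p J).totalDegree ≤ r - m) ∧
        ∑ J ∈ multiIdx N r, p J • KJ N n r J = L := by
  rw [mem_diffOps_iff_exists_KJ hrn]
  constructor
  · rintro ⟨⟨p, rfl⟩, h⟩
    refine ⟨p, fun J hJ => totalDegree_coeff_le hN hm hrn p (fun f hf => ?_) J
      (mem_multiIdx.1 hJ), rfl⟩
    simpa [LinearMap.sum_apply] using h f hf
  · rintro ⟨p, hp, rfl⟩
    refine ⟨⟨p, rfl⟩, fun f hf => ?_⟩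
    simpa [LinearMap.sum_apply] using totalDegree_sum_KJ_le hm hrn p hp hf

lemma mem_range_ofCoeffs_iff {k : ℕ} (L : MvPolynomial (Fin N) ℝ →ₗ[ℝ] MvPolynomial (Fin N) ℝ) :
    L ∈ LinearMap.range (ofCoeffs N n r k) ↔
    ∃ p : (Fin N → ℕ) → MvPolynomial (Fin N) ℝ,
      (∀ J ∈ multiIdx N r, (p J).totalDegree ≤ k) ∧
        ∑ J ∈ multiIdx N r, p J • KJ N n r J = L := by
  constructor
  · rintro ⟨p, rfl⟩
    have hinj := Subtype.val_injective (p := fun J => J ∈ multiIdx N r)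
    refine ⟨Function.extend Subtype.val (fun J => (p J : MvPolynomial (Fin N) ℝ)) 0, ?_, ?_⟩
    · intro J hJ
      rw [hinj.extend_apply _ _ (⟨J, hJ⟩ : multiIdx N r)]
      exact (mem_restrictTotalDegree _ _ _).1 (p ⟨J, hJ⟩).2
    · rw [ofCoeffs_apply, ← Finset.sum_coe_sort]
      simp only [hinj.extend_apply]
  · rintro ⟨p, hp, rfl⟩
    refine ⟨fun J => ⟨p J, (mem_restrictTotalDegree _ _ _).2 (hp J J.2)⟩, ?_⟩
    exact Finset.sum_coe_sort (multiIdx N r) fun J => p J • KJ N n r J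

lemma finrank_range_ofCoeffs (hN : 1 ≤ N) (hrn : r ≤ n) (k : ℕ) :
    Module.finrank ℝ (LinearMap.range (ofCoeffs N n r k))
      = (N + k).choose k * (N + r).choose r := by
  rw [LinearMap.finrank_range_of_inj (ofCoeffs_injective hN hrn k), Module.finrank_pi_fintype]
  simp [finrank_restrictTotalDegree, card_multiIdx, mul_comm]

end Dimension

/-- For `m ≤ r ≤ n`: an operator `L[f] = ∑_{|I|≤r} a_I(x) D_I f` maps
`P_n^N` into `P_{n−m}^N` iff `L = ∑_{|J|≤r} p_J(x)·K_J` with `deg p_J ≤ r−m`, the `p_J`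
being uniquely determined; consequently the space of such operators has dimension
`C(N+r−m, r−m)·C(N+r, r)`. -/
theorem mv_operator_decomposition (N n r m : ℕ) (hN : 1 ≤ N) (hm : m ≤ r) (hrn : r ≤ n) :
    (∀ a : (Fin N → ℕ) → MvPolynomial (Fin N) ℝ,
      ((∀ f : MvPolynomial (Fin N) ℝ, f.totalDegree ≤ n →
          (∑ I ∈ multiIdx N r, a I * DJ I f).totalDegree ≤ n - m) ↔
        (∃ p : (Fin N → ℕ) → MvPolynomial (Fin N) ℝ,
          (∀ J ∈ multiIdx N r, (p J).totalDegree ≤ r - m) ∧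
          ∀ f : MvPolynomial (Fin N) ℝ,
            (∑ I ∈ multiIdx N r, a I * DJ I f) = ∑ J ∈ multiIdx N r, p J * KJ N n r J f)) ∧
      ((∀ f : MvPolynomial (Fin N) ℝ, f.totalDegree ≤ n →
          (∑ I ∈ multiIdx N r, a I * DJ I f).totalDegree ≤ n - m) →
        ∃! p : { J // J ∈ multiIdx N r } → MvPolynomial (Fin N) ℝ,
          (∀ J, (p J).totalDegree ≤ r - m) ∧
          ∀ f : MvPolynomial (Fin N) ℝ,
            (∑ I ∈ multiIdx N r, a I * DJ I f)
              = ∑ J ∈ (multiIdx N r).attach, p J * KJ N n r (J : Fin N → ℕ) f)) ∧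
    Module.finrank ℝ
      (Submodule.span ℝ {L : MvPolynomial (Fin N) ℝ →ₗ[ℝ] MvPolynomial (Fin N) ℝ |
        (∃ a : (Fin N → ℕ) → MvPolynomial (Fin N) ℝ,
          L = ∑ I ∈ multiIdx N r, (LinearMap.mulLeft ℝ (a I)).comp (DJ I)) ∧
        ∀ f : MvPolynomial (Fin N) ℝ, f.totalDegree ≤ n → (L f).totalDegree ≤ n - m})
      = (N + (r - m)).choose (r - m) * (N + r).choose r := by
  have happly (a : (Fin N → ℕ) → MvPolynomial (Fin N) ℝ)
      (T : (Fin N → ℕ) → MvPolynomial (Fin N) ℝ →ₗ[ℝ] MvPolynomial (Fin N) ℝ)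
      (f : MvPolynomial (Fin N) ℝ) :
      (∑ I ∈ multiIdx N r, a I • T I) f = ∑ I ∈ multiIdx N r, a I * T I f := by
    simp [LinearMap.sum_apply]
  have hiff (a : (Fin N → ℕ) → MvPolynomial (Fin N) ℝ) :
      (∀ f : MvPolynomial (Fin N) ℝ, f.totalDegree ≤ n →
          (∑ I ∈ multiIdx N r, a I * DJ I f).totalDegree ≤ n - m) ↔
        (∃ p : (Fin N → ℕ) → MvPolynomial (Fin N) ℝ,
          (∀ J ∈ multiIdx N r, (p J).totalDegree ≤ r - m) ∧
          ∀ f : MvPolynomial (Fin N) ℝ,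
            (∑ I ∈ multiIdx N r, a I * DJ I f) = ∑ J ∈ multiIdx N r, p J * KJ N n r J f) := by
    have h := mem_diffOps_and_totalDegree_iff hN hm hrn (∑ I ∈ multiIdx N r, a I • DJ I)
    rw [and_iff_right (mem_diffOps_iff_exists_DJ.2 ⟨a, rfl⟩)] at h
    simp only [happly, LinearMap.ext_iff] at h
    simpa only [eq_comm] using h
  refine ⟨fun a => ⟨hiff a, fun h => ?_⟩, ?_⟩
  · obtain ⟨p, hp, hpf⟩ := (hiff a).1 h
    refine ⟨fun J => p J, ⟨fun J => hp J J.2, fun f => ?_⟩, fun q ⟨_, hq⟩ => ?_⟩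
    · rw [hpf f, ← Finset.sum_attach]
    · refine coeff_unique hN hrn _ _ fun f => ?_
      rw [Finset.univ_eq_attach, ← hq f, hpf f, ← Finset.sum_attach]
  · rw [← finrank_range_ofCoeffs hN hrn (r - m),
      ← Submodule.span_eq (LinearMap.range (ofCoeffs N n r (r - m)))]
    refine congrArg (fun S : Set (MvPolynomial (Fin N) ℝ →ₗ[ℝ] MvPolynomial (Fin N) ℝ) =>
      Module.finrank ℝ (Submodule.span ℝ S)) (Set.ext fun L => ?_)
    rw [SetLike.mem_coe, mem_range_ofCoeffs_iff, ← mem_diffOps_and_totalDegree_iff hN hm hrn,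
      mem_diffOps_iff_exists_DJ]
    refine and_congr_left fun _ => exists_congr fun a => ?_
    rw [eq_comm]
    rfl
end

section
/- Let n, r be natural numbers with 3r < 2n, and let Q be a real polynomial in the variables x, u_0, u_1, …, u_r. If for every polynomial f ∈ ℝ[x] of degree at most n the polynomial T_Q[f] = Q(x, f, f', …, f^{(r)}) has degree at most n, then every monomial of Q has total degree at most 2 in the variables u_0, …, u_r; that is, any operator of order r < 2n/3 mapping P_n into P_n has at most quadratic non-linearities. -/
/-- The action of a (possibly non-linear) differential operator of order at most `r`,
given by a polynomial `Q` in the variables `x, u_0, …, u_r` (variable `0` is `x`,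
variable `i+1` is `u_i`), on a polynomial `f`: `T_Q[f] = Q(x, f, f', …, f^{(r)})`. -/
noncomputable def Tact {r : ℕ} (Q : MvPolynomial (Fin (r + 2)) ℝ) (f : Polynomial ℝ) :
    Polynomial ℝ :=
  MvPolynomial.aeval
    (Fin.cases Polynomial.X (fun i : Fin (r + 1) => Polynomial.derivative^[(i : ℕ)] f)) Q

open Polynomial in
/-- The values substituted for the variables `x, u_0, …, u_r` in `Tact`. -/
noncomputable def jet (r : ℕ) {A : Type*} [CommRing A] (f : A[X]) : Fin (r + 2) → A[X] :=
  Fin.cases X (fun i : Fin (r + 1) => derivative^[(i : ℕ)] f)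

/-- The weights of `x, u_0, …, u_r` that measure the degree in `u_0, …, u_r`. -/
def degWeight (r : ℕ) : Fin (r + 2) → ℕ := Fin.cases 0 (fun _ => 1)

/-- The weights of `x, u_0, …, u_r` under the dilations `f ↦ c ^ r • f (x / c)`. -/
def dilWeight (r : ℕ) : Fin (r + 2) → ℕ := Fin.cases 1 (fun i : Fin (r + 1) => r - i)

namespace MvPolynomial

variable {σ A : Type*} [CommRing A] [Algebra ℝ A]

/-- Substituting elements of pieces of a filtration-like graded family into a weighted homogeneous
polynomial yields an element of the corresponding piece. -/
theorem IsWeightedHomogeneous.aeval_mem {w : σ → ℕ} {R : MvPolynomial σ ℝ} {d : ℕ}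
    (hR : IsWeightedHomogeneous w R d) (S : ℕ → Submodule ℝ A) [SetLike.GradedMonoid S]
    {g : σ → A} (hg : ∀ i, g i ∈ S (w i)) : aeval g R ∈ S d := by
  rw [aeval_def, eval₂_eq]
  refine Submodule.sum_mem _ fun s hs => ?_
  rw [← Algebra.smul_def]
  refine Submodule.smul_mem _ _ ?_
  have hw := hR (mem_support_iff.mp hs)
  rw [Finsupp.weight_apply, Finsupp.sum] at hw
  rw [← hw]
  exact SetLike.prod_pow_mem_graded S w g s fun i _ => hg i

theorem IsWeightedHomogeneous.aeval_smul {w : σ → ℕ} {R : MvPolynomial σ ℝ} {d : ℕ}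
    (hR : IsWeightedHomogeneous w R d) (c : ℝ) (g : σ → A) :
    aeval (fun i => c ^ w i • g i) R = c ^ d • aeval g R := by
  rw [aeval_def, eval₂_eq, aeval_def, eval₂_eq, Finset.smul_sum]
  refine Finset.sum_congr rfl fun s hs => ?_
  have hw := hR (mem_support_iff.mp hs)
  rw [Finsupp.weight_apply, Finsupp.sum] at hw
  rw [← mul_smul_comm, ← hw, ← Finset.prod_pow_eq_pow_sum]
  simp only [smul_pow, Finset.prod_smul, ← pow_mul, smul_eq_mul, mul_comm]

/-- A weighted homogeneous polynomial vanishing on the hyperplane where a variable of weight one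
equals `1` is zero. -/
theorem IsWeightedHomogeneous.eq_zero_of_eval {w : σ → ℕ} {R : MvPolynomial σ ℝ} {d : ℕ}
    (hR : IsWeightedHomogeneous w R d) (j : σ) (hj : w j = 1)
    (h0 : ∀ v : σ → ℝ, v j = 1 → aeval v R = 0) : R = 0 := by
  have hX : X j * R = 0 := by
    refine MvPolynomial.funext fun v => ?_
    rw [map_mul, eval_X, map_zero]
    by_cases hv : v j = 0
    · rw [hv, zero_mul]
    have h1 := hR.aeval_smul (v j) (fun i => ((v j)⁻¹) ^ w i • v i)
    rw [h0 (fun i => ((v j)⁻¹) ^ w i • v i) (by simp [hj, hv]), smul_zero] at h1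
    have h2 : (fun i => v j ^ w i • ((v j)⁻¹) ^ w i • v i) = v := by
      funext i
      rw [smul_smul, ← mul_pow, mul_inv_cancel₀ hv, one_pow, one_smul]
    rw [h2, aeval_eq_eval] at h1
    simp only [coe_eval₂Hom, eval] at h1 ⊢
    rw [h1, mul_zero]
  exact (mul_eq_zero.mp hX).resolve_left (X_ne_zero j)

end MvPolynomial

open Polynomial

theorem Tact_eq_aeval_jet {r : ℕ} (Q : MvPolynomial (Fin (r + 2)) ℝ) (f : ℝ[X]) :
    Tact Q f = MvPolynomial.aeval (jet r f) Q := rfl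

theorem Polynomial.iterate_derivative_comp_C_mul_X (f : ℝ[X]) (a : ℝ) (i : ℕ) :
    derivative^[i] (f.comp (C a * X)) = a ^ i • (derivative^[i] f).comp (C a * X) := by
  induction i with
  | zero => simp
  | succ i ih =>
    rw [Function.iterate_succ_apply', ih, derivative_smul, derivative_comp,
      Function.iterate_succ_apply', pow_succ, mul_smul]
    simp [smul_eq_C_mul]

/-- Weighted homogeneous components of an operator preserving `P_n` preserve `P_n`, provided the
weight comes from a symmetry of `P_n` that rescales the independent variable. -/
theorem degree_Tact_weightedHomogeneousComponent_le {n r : ℕ} (w : Fin (r + 2) → ℕ) (a : ℝ → ℝ)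
    (ha : ∀ c ≠ 0, a c ≠ 0)
    (hsym : ∀ c ≠ 0, ∀ f : ℝ[X], f.degree ≤ n → ∃ g : ℝ[X], g.degree ≤ n ∧
      ∀ i, jet r g i = c ^ w i • (jet r f i).comp (C (a c) * X))
    {Q : MvPolynomial (Fin (r + 2)) ℝ} (hQ : ∀ f : ℝ[X], f.degree ≤ n → (Tact Q f).degree ≤ n)
    (d : ℕ) (f : ℝ[X]) (hf : f.degree ≤ n) :
    (Tact (MvPolynomial.weightedHomogeneousComponent w d Q) f).degree ≤ n := by
  classical
  set K := fun d => MvPolynomial.weightedHomogeneousComponent w d Q with hK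
  have hfin := MvPolynomial.weightedHomogeneousComponent_finsupp (w := w) Q
  have hsum : Q = ∑ e ∈ hfin.toFinset, K e := by
    conv_lhs => rw [← MvPolynomial.sum_weightedHomogeneousComponent w Q]
    exact finsum_eq_sum _ hfin
  rw [degree_le_iff_coeff_zero]
  intro m hm
  by_cases hd : d ∈ hfin.toFinset
  swap
  · have : MvPolynomial.weightedHomogeneousComponent w d Q = 0 := by
      by_contra hne
      exact hd (hfin.mem_toFinset.mpr hne)
    rw [this, Tact, map_zero, coeff_zero]
  set p : ℝ[X] := ∑ e ∈ hfin.toFinset, C ((Tact (K e) f).coeff m) * X ^ e with hp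
  have hroot : ∀ c : ℝ, c ≠ 0 → p.eval c = 0 := by
    intro c hc
    obtain ⟨g, hg, hjet⟩ := hsym c hc f hf
    have h1 : Tact Q g = ∑ e ∈ hfin.toFinset, c ^ e • (Tact (K e) f).comp (C (a c) * X) := by
      conv_lhs => rw [hsum]
      rw [Tact_eq_aeval_jet, map_sum]
      refine Finset.sum_congr rfl fun e _ => ?_
      rw [funext hjet, (MvPolynomial.weightedHomogeneousComponent_isWeightedHomogeneous e
        Q).aeval_smul c, Tact_eq_aeval_jet]
      congr 1
      exact (MvPolynomial.comp_aeval_apply (jet r f) (Polynomial.aeval (C (a c) * X)) (K e)).symm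
    have h2 := degree_le_iff_coeff_zero _ _ |>.mp (hQ g hg) m hm
    rw [h1, finsetSum_coeff] at h2
    simp only [coeff_smul, comp_C_mul_X_coeff, smul_eq_mul, ← mul_assoc] at h2
    rw [← Finset.sum_mul] at h2
    have h3 := (mul_eq_zero.mp h2).resolve_right (pow_ne_zero _ (ha c hc))
    rw [hp, eval_finsetSum, ← h3]
    exact Finset.sum_congr rfl fun e _ => by rw [eval_mul, eval_C, eval_X_pow, mul_comm]
  have hp0 : p = 0 := by
    refine eq_zero_of_infinite_isRoot p ?_
    exact (Set.finite_singleton (0 : ℝ)).infinite_compl.mono fun c hc => hroot c hc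
  have hcoeff : p.coeff d = (Tact (K d) f).coeff m := by
    rw [hp, finsetSum_coeff]
    simp only [coeff_C_mul_X_pow]
    rw [Finset.sum_ite_eq, if_pos hd]
  rw [← hcoeff, hp0, coeff_zero]

/-- There is a polynomial with only monomials between `x ^ (n - b)` and `x ^ n` whose derivatives
of orders `r - b, r - b + 1, …, r` at `1` are `1, 0, …, 0`. -/
theorem exists_flag_polynomial {n r b : ℕ} (hb : b ≤ r) (hr : r < n) :
    ∃ f : ℝ[X], (∀ m, f.coeff m ≠ 0 → n - b ≤ m ∧ m ≤ n) ∧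
      (∀ a < b, (derivative^[r - a] f).eval 1 = 0) ∧ (derivative^[r - b] f).eval 1 = 1 := by
  set E : (Fin (b + 1) → ℝ) →ₗ[ℝ] ℝ[X] :=
    Fintype.linearCombination ℝ (fun p : Fin (b + 1) => (X : ℝ[X]) ^ (n - p)) with hE
  have hcoeff : ∀ c m, (E c).coeff m = ∑ p : Fin (b + 1), if m = n - p then c p else 0 := by
    intro c m
    simp [hE, Fintype.linearCombination_apply, finsetSum_coeff, coeff_X_pow]
  have hsupp : ∀ c m, (E c).coeff m ≠ 0 → n - b ≤ m ∧ m ≤ n := by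
    intro c m hm
    rw [hcoeff] at hm
    obtain ⟨p, -, hp⟩ := Finset.exists_ne_zero_of_sum_ne_zero hm
    have : m = n - p := by
      by_contra hne
      exact hp (if_neg hne)
    have := p.2
    omega
  have hdiag : ∀ c (p : Fin (b + 1)), (E c).coeff (n - p) = c p := by
    intro c p
    rw [hcoeff, Finset.sum_eq_single p, if_pos rfl]
    · intro q _ hq
      refine if_neg fun h => hq (Fin.ext ?_)
      have := p.2
      have := q.2
      omega
    · simp
  set L : (Fin (b + 1) → ℝ) →ₗ[ℝ] (Fin (b + 1) → ℝ) :=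
    LinearMap.pi fun a => leval 1 ∘ₗ (derivative ^ (r - (a : ℕ)) : Module.End ℝ ℝ[X]) ∘ₗ E with hL
  have hLapply : ∀ c a, L c a = (derivative^[r - (a : ℕ)] (E c)).eval 1 := by
    intro c a
    simp [hL, Module.End.pow_apply, leval]
  have hinj : Function.Injective L := by
    rw [injective_iff_map_eq_zero]
    intro c hc
    set h := derivative^[r - b] (E c) with hh
    have hhcoeff : ∀ m, h.coeff m =
        (m + (r - b)).descFactorial (r - b) • (E c).coeff (m + (r - b)) :=
      fun m => coeff_iterate_derivative _ _
    have hroot : ∀ j ≤ b, (derivative^[j] h).IsRoot 1 := by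
      intro j hj
      have := congrFun hc ⟨b - j, by omega⟩
      rw [hLapply] at this
      rw [IsRoot, hh, ← Function.iterate_add_apply]
      rw [show j + (r - b) = r - (b - j) by omega]
      exact this
    have hh0 : h = 0 := by
      by_contra hne
      have h1 : (X - C 1) ^ (b + 1) ∣ h :=
        (le_rootMultiplicity_iff hne).mp
          (lt_rootMultiplicity_of_isRoot_iterate_derivative hne hroot)
      have h2 : X ^ (n - r) ∣ h := by
        rw [X_pow_dvd_iff]
        intro d hd
        rw [hhcoeff]
        by_contra hcd
        have := (hsupp c _ (right_ne_zero_of_smul hcd)).1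
        omega
      have hcop : IsCoprime ((X - C 1 : ℝ[X]) ^ (b + 1)) (X ^ (n - r)) := by
        refine IsCoprime.pow ⟨-1, 1, ?_⟩
        simp
      have h3 := natDegree_le_of_dvd (hcop.mul_dvd h1 h2) hne
      rw [natDegree_mul (pow_ne_zero _ (X_sub_C_ne_zero 1)) (pow_ne_zero _ X_ne_zero),
        natDegree_pow, natDegree_X_sub_C, natDegree_X_pow] at h3
      have h4 : h.coeff h.natDegree ≠ 0 := leadingCoeff_ne_zero.mpr hne
      rw [hhcoeff] at h4
      have := (hsupp c _ (right_ne_zero_of_smul h4)).2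
      omega
    funext p
    have hp := p.2
    have h5 := hhcoeff (n - p - (r - b))
    rw [hh0, coeff_zero, show n - (p : ℕ) - (r - b) + (r - b) = n - p by omega, hdiag] at h5
    rcases smul_eq_zero.mp h5.symm with h6 | h6
    · rw [Nat.descFactorial_eq_zero_iff_lt] at h6
      omega
    · exact h6
  obtain ⟨c, hc⟩ := LinearMap.injective_iff_surjective.mp hinj (Pi.single (Fin.last b) 1)
  refine ⟨E c, hsupp c, fun a ha => ?_, ?_⟩
  · have := hLapply c ⟨a, by omega⟩
    rw [hc, Pi.single_eq_of_ne (by simp [Fin.ext_iff]; omega)] at this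
    exact this.symm
  · have := hLapply c (Fin.last b)
    rw [hc, Pi.single_eq_same] at this
    exact this.symm

/-- The polynomials in `x` over `ℝ[s]` whose coefficient of `x ^ q` is divisible by
`s ^ (d - q)`. -/
def coeffDvdSubmodule (d : ℕ) : Submodule ℝ ℝ[X][X] where
  carrier := {g | ∀ q, X ^ (d - q) ∣ g.coeff q}
  add_mem' hg hh q := by
    rw [coeff_add]
    exact dvd_add (hg q) (hh q)
  zero_mem' q := by simp
  smul_mem' c g hg q := by
    rw [coeff_smul, smul_eq_C_mul]
    exact (hg q).mul_left _

theorem mem_coeffDvdSubmodule {d : ℕ} {g : ℝ[X][X]} :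
    g ∈ coeffDvdSubmodule d ↔ ∀ q, X ^ (d - q) ∣ g.coeff q := Iff.rfl

instance : SetLike.GradedMonoid coeffDvdSubmodule where
  one_mem q := by simp
  mul_mem d e g h hg hh q := by
    rw [coeff_mul]
    refine Finset.dvd_sum fun x hx => ?_
    rw [Finset.HasAntidiagonal.mem_antidiagonal] at hx
    have hdvd := mul_dvd_mul (hg x.1) (hh x.2)
    rw [← pow_add] at hdvd
    exact (pow_dvd_pow X (by omega)).trans hdvd

instance : SetLike.GradedMonoid (fun d : ℕ => degreeLE ℝ (d : WithBot ℕ)) where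
  one_mem := mem_degreeLE.mpr (by simp)
  mul_mem d e g h hg hh := by
    rw [mem_degreeLE] at *
    rw [Nat.cast_add]
    exact (degree_mul_le g h).trans (add_le_add hg hh)

/-- A homogeneous operator of degree `k` preserving `P_n` vanishes on the `r`-jets at `1` of all
combinations of polynomials adapted to the flag of jets. -/
theorem aeval_jet_eq_zero {n r k W : ℕ} (hrn : r < n) (hk : k * r < (k - 1) * n)
    {R : MvPolynomial (Fin (r + 2)) ℝ}
    (hdeg : MvPolynomial.IsWeightedHomogeneous (degWeight r) R k)
    (hdil : MvPolynomial.IsWeightedHomogeneous (dilWeight r) R W)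
    (hR : ∀ f : ℝ[X], f.degree ≤ n → (Tact R f).degree ≤ n)
    (f : Fin (r + 1) → ℝ[X])
    (hsupp : ∀ b m, (f b).coeff m ≠ 0 → n - b ≤ m ∧ m ≤ n)
    (hflag : ∀ (b : Fin (r + 1)), ∀ a < (b : ℕ), (derivative^[r - a] (f b)).eval 1 = 0)
    (τ : Fin (r + 1) → ℝ) :
    MvPolynomial.aeval (Fin.cases 1 fun i : Fin (r + 1) =>
      ∑ b, τ b * (derivative^[(i : ℕ)] (f b)).eval 1 : Fin (r + 2) → ℝ) R = 0 := by
  set G : ℝ[X][X] := ∑ b, C (C (τ b) * X ^ (b : ℕ)) * (f b).map C with hG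
  have hderiv : ∀ i, derivative^[i] G =
      ∑ b, C (C (τ b) * X ^ (b : ℕ)) * (derivative^[i] (f b)).map C := by
    intro i
    rw [hG, iterate_derivative_sum]
    simp only [iterate_derivative_C_mul, iterate_derivative_map]
  set P : ℝ[X][X] := MvPolynomial.aeval (jet r G) R with hP
  have hGcoeff : ∀ m, G.coeff m = ∑ b, C (τ b) * X ^ (b : ℕ) * C ((f b).coeff m) := by
    intro m
    simp only [hG, finsetSum_coeff, coeff_C_mul, coeff_map]
  have hhigh : ∀ q, n < q → P.coeff q = 0 := by
    intro q hq
    refine Polynomial.funext fun s => ?_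
    set ψ : ℝ[X][X] →ₐ[ℝ] ℝ[X] := mapAlgHom (Polynomial.aeval s) with hψ
    have hψcoeff : ∀ g m, (ψ g).coeff m = (g.coeff m).eval s := by
      intro g m
      simp [hψ, coeff_map]
    have hψG : (ψ G).degree ≤ n := by
      rw [degree_le_iff_coeff_zero]
      intro m hm
      rw [hψcoeff, hGcoeff, eval_finsetSum]
      refine Finset.sum_eq_zero fun b _ => ?_
      have : (f b).coeff m = 0 := by
        by_contra hne
        exact absurd (hsupp b m hne).2 (not_le.mpr (by exact_mod_cast hm))
      rw [this, C_0, mul_zero, eval_zero]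
    have hψP : ψ P = Tact R (ψ G) := by
      rw [hP, MvPolynomial.comp_aeval_apply, Tact_eq_aeval_jet]
      congr 2
      funext i
      refine Fin.cases ?_ (fun j => ?_) i
      · simp [jet, hψ]
      · simp only [jet, Fin.cases_succ, hψ, coe_mapAlgHom, iterate_derivative_map]
    rw [eval_zero, ← hψcoeff, hψP]
    exact (degree_le_iff_coeff_zero _ _).mp (hR _ hψG) q (by exact_mod_cast hq)
  have hdvd : ∀ q, X ^ ((n - r) * k + W - q) ∣ P.coeff q := by
    have hw : MvPolynomial.IsWeightedHomogeneous
        (fun i => (n - r) * degWeight r i + dilWeight r i) R ((n - r) * k + W) := by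
      intro d hd
      rw [← hdeg hd, ← hdil hd]
      simp only [Finsupp.weight_apply, Finsupp.sum, Finset.mul_sum, ← Finset.sum_add_distrib,
        smul_eq_mul]
      exact Finset.sum_congr rfl fun i _ => by ring
    refine mem_coeffDvdSubmodule.mp (hw.aeval_mem coeffDvdSubmodule fun i => ?_)
    refine Fin.cases ?_ (fun j => ?_) i
    · intro q
      rcases Nat.eq_zero_or_pos q with rfl | hq
      · simp [jet]
      · simp [degWeight, dilWeight, Nat.sub_eq_zero_of_le hq]
    · intro q
      simp only [jet, degWeight, dilWeight, Fin.cases_succ, coeff_iterate_derivative, hGcoeff]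
      rw [nsmul_eq_mul]
      refine Dvd.dvd.mul_left (Finset.dvd_sum fun b _ => ?_) _
      by_cases hne : (f b).coeff (q + j) = 0
      · simp [hne]
      · have h1 := hsupp b _ hne
        have h2 := j.2
        refine Dvd.dvd.mul_right (Dvd.dvd.mul_left (pow_dvd_pow X ?_) _) _
        omega
  have hevaldvd : X ^ (W + 1) ∣ P.eval 1 := by
    rw [eval_eq_sum, Polynomial.sum]
    refine Finset.dvd_sum fun q hq => Dvd.dvd.mul_right ((pow_dvd_pow X ?_).trans (hdvd q)) _
    have hqn : q ≤ n := by
      by_contra hlt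
      exact mem_support_iff.mp hq (hhigh q (not_le.mp hlt))
    obtain ⟨N, rfl⟩ := Nat.exists_eq_add_of_lt hrn
    rcases k with _ | k
    · simp at hk
    have h3 : r + N + 1 - r = N + 1 := by omega
    rw [h3]
    simp only [Nat.add_sub_cancel] at hk
    have : W + 1 + q ≤ (N + 1) * (k + 1) + W := by nlinarith
    omega
  have hevaljet : P.eval 1 = MvPolynomial.aeval (fun i => (jet r G i).eval 1) R :=
    MvPolynomial.comp_aeval_apply (jet r G)
      ((Polynomial.aeval (R := ℝ[X]) (1 : ℝ[X])).restrictScalars ℝ) R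
  have hjet : ∀ i : Fin (r + 1), (jet r G i.succ).eval 1 =
      ∑ b, C (τ b) * X ^ (b : ℕ) * C ((derivative^[(i : ℕ)] (f b)).eval 1) := by
    intro i
    simp only [jet, Fin.cases_succ, hderiv, eval_finsetSum, eval_mul, eval_C]
    refine Finset.sum_congr rfl fun b _ => ?_
    rw [← C_1, eval_map, eval₂_at_apply]
  have hevaldeg : (P.eval 1).degree ≤ W := by
    rw [hevaljet, ← mem_degreeLE]
    refine hdil.aeval_mem (fun d : ℕ => degreeLE ℝ (d : WithBot ℕ)) fun i => ?_
    refine Fin.cases ?_ (fun j => ?_) i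
    · rw [mem_degreeLE]
      simp [jet, dilWeight]
    · rw [hjet]
      refine Submodule.sum_mem _ fun b _ => ?_
      rw [mem_degreeLE]
      simp only [dilWeight, Fin.cases_succ]
      have hj := j.2
      by_cases hb : r - (j : ℕ) < b
      · have := hflag b _ hb
        rw [show r - (r - (j : ℕ)) = j by omega] at this
        simp [this]
      · rw [mul_assoc, mul_comm (X ^ _), ← mul_assoc, ← C_mul]
        exact (degree_C_mul_X_pow_le _ _).trans (by exact_mod_cast not_lt.mp hb)
  have hzero : P.eval 1 = 0 := by
    refine eq_zero_of_dvd_of_degree_lt hevaldvd (hevaldeg.trans_lt ?_)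
    rw [degree_X_pow]
    exact_mod_cast Nat.lt_succ_self W
  rw [hevaljet] at hzero
  have h1 := congrArg (Polynomial.aeval (1 : ℝ)) hzero
  rw [MvPolynomial.comp_aeval_apply, map_zero] at h1
  rw [← h1]
  congr 2
  funext i
  refine Fin.cases ?_ (fun j => ?_) i
  · simp [jet]
  · simp [hjet, coe_aeval_eq_eval]

/-- A homogeneous operator preserving `P_n` whose order is small compared with its degree `k`
is zero. -/
theorem eq_zero_of_isWeightedHomogeneous {n r k W : ℕ} (hrn : r < n)
    (hk : k * r < (k - 1) * n) {R : MvPolynomial (Fin (r + 2)) ℝ}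
    (hdeg : MvPolynomial.IsWeightedHomogeneous (degWeight r) R k)
    (hdil : MvPolynomial.IsWeightedHomogeneous (dilWeight r) R W)
    (hR : ∀ f : ℝ[X], f.degree ≤ n → (Tact R f).degree ≤ n) : R = 0 := by
  choose f hsupp hflag hone using
    fun b : Fin (r + 1) => exists_flag_polynomial (Nat.lt_succ_iff.mp b.2) hrn
  refine hdil.eq_zero_of_eval 0 rfl fun v hv => ?_
  set M : Matrix (Fin (r + 1)) (Fin (r + 1)) ℝ :=
    Matrix.of fun a b => (derivative^[r - (a : ℕ)] (f b)).eval 1 with hM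
  have htri : M.IsLowerTriangular := fun a b hab => hflag b a hab
  have hunit : IsUnit M := by
    rw [Matrix.isUnit_iff_isUnit_det, Matrix.det_of_isLowerTriangular M htri]
    simp [hM, hone]
  obtain ⟨τ, hτ⟩ := Matrix.mulVec_surjective_iff_isUnit.mpr hunit fun a => v a.rev.succ
  rw [← aeval_jet_eq_zero hrn hk hdeg hdil hR f hsupp hflag τ]
  congr 2
  funext i
  refine Fin.cases ?_ (fun j => ?_) i
  · exact hv
  · have h1 := congrFun hτ j.rev
    have h2 : r - (j.rev : ℕ) = j := by
      have := j.2
      rw [Fin.val_rev]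
      omega
    simp only [Fin.rev_rev] at h1
    rw [Fin.cases_succ, ← h1]
    simp only [Matrix.mulVec, dotProduct, hM, Matrix.of_apply, h2, mul_comm]

/-- If `3r < 2n` and the operator `T_Q` of order at most `r` maps every
polynomial of degree at most `n` to a polynomial of degree at most `n`, then every
monomial of `Q` has total degree at most `2` in the variables `u_0, …, u_r`:
the operator has at most quadratic non-linearities. -/
theorem low_order_implies_at_most_quadratic (n r : ℕ) (hr : 3 * r < 2 * n)
    (Q : MvPolynomial (Fin (r + 2)) ℝ)
    (h : ∀ f : Polynomial ℝ, f.degree ≤ (n : WithBot ℕ) →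
      (Tact Q f).degree ≤ (n : WithBot ℕ)) :
    ∀ s ∈ Q.support, (∑ i : Fin (r + 1), s i.succ) ≤ 2 := by
  intro s hs
  by_contra hlt
  set k := ∑ i : Fin (r + 1), s i.succ with hk
  have hks : Finsupp.weight (degWeight r) s = k := by
    rw [Finsupp.weight_apply, Finsupp.sum_fintype _ _ (by simp), Fin.sum_univ_succ]
    simp [degWeight, hk]
  set Qk := MvPolynomial.weightedHomogeneousComponent (degWeight r) k Q with hQk
  set R := MvPolynomial.weightedHomogeneousComponent (dilWeight r)
    (Finsupp.weight (dilWeight r) s) Qk with hR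
  have hQkpres : ∀ f : ℝ[X], f.degree ≤ n → (Tact Qk f).degree ≤ n := by
    refine degree_Tact_weightedHomogeneousComponent_le (degWeight r) (fun _ => 1)
      (fun _ _ => one_ne_zero) (fun c _ f hf => ⟨c • f, (degree_smul_le c f).trans hf, ?_⟩) h k
    refine fun i => Fin.cases ?_ (fun j => ?_) i
    · simp [jet, degWeight]
    · simp [jet, degWeight, iterate_derivative_smul]
  have hRpres : ∀ f : ℝ[X], f.degree ≤ n → (Tact R f).degree ≤ n := by
    refine degree_Tact_weightedHomogeneousComponent_le (dilWeight r) (fun c => c⁻¹)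
      (fun _ hc => inv_ne_zero hc)
      (fun c hc f hf => ⟨c ^ r • f.comp (C c⁻¹ * X), ?_, fun i => Fin.cases ?_ (fun j => ?_) i⟩)
      hQkpres _
    · rw [degree_le_iff_coeff_zero] at hf ⊢
      intro m hm
      rw [coeff_smul, comp_C_mul_X_coeff, hf m hm, zero_mul, smul_zero]
    · simp [jet, dilWeight, smul_eq_C_mul, ← mul_assoc, ← C_mul, hc]
    · simp only [jet, dilWeight, Fin.cases_succ]
      rw [iterate_derivative_smul, iterate_derivative_comp_C_mul_X, smul_smul,
        pow_sub₀ c hc (Nat.lt_succ_iff.mp j.2), inv_pow]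
  have hdil : MvPolynomial.IsWeightedHomogeneous (dilWeight r) R _ :=
    MvPolynomial.weightedHomogeneousComponent_isWeightedHomogeneous _ _
  have hdeg : MvPolynomial.IsWeightedHomogeneous (degWeight r) R k := by
    intro d hd
    rw [hR, MvPolynomial.coeff_weightedHomogeneousComponent] at hd
    refine MvPolynomial.weightedHomogeneousComponent_isWeightedHomogeneous k Q
      (fun h0 => hd ?_)
    rw [hQk, h0, ite_self]
  have hkr : k * r < (k - 1) * n := by
    obtain ⟨l, hl⟩ : ∃ l, k = l + 3 := ⟨k - 3, by omega⟩
    rw [hl, show l + 3 - 1 = l + 2 by omega]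
    nlinarith
  have hR0 : R = 0 := eq_zero_of_isWeightedHomogeneous (by omega) hkr hdeg hdil hRpres
  have hcoeff : R.coeff s = Q.coeff s := by
    rw [hR, MvPolynomial.coeff_weightedHomogeneousComponent, if_pos rfl, hQk,
      MvPolynomial.coeff_weightedHomogeneousComponent, if_pos hks]
  rw [hR0, MvPolynomial.coeff_zero] at hcoeff
  exact MvPolynomial.mem_support_iff.mp hs hcoeff.symm
end

section
/- Fix n ≥ 1 and an integer k with −n ≤ k ≤ n. Set r_min := ⌈(n+k)/2⌉, r_max := min(n, n+k), and for an integer r with r_min ≤ r ≤ r_max set m(k,r) := k + 2·(r − r_min). For f ∈ ℝ[x] define the quadratic autonomous operator Q_{k,r}[f] := Σ_{i=n+k−r}^{r} (−1)^i · C(i−k+1, n−r+1) · C(n−i, n−r) · f^{(i)} · f^{(n+k−i)}. Then for every polynomial f of degree at most n, Q_{k,r}[f] has degree at most n − m(k,r), and there exists a polynomial f of degree at most n such that Q_{k,r}[f] has degree exactly n − m(k,r); i.e., the operator Q_{k,r} has monomial deficiency k, order r, and deficiency exactly m(k,r) relative to P_n. -/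
open Polynomial

open scoped Nat

namespace QuadraticAutonomous

lemma iterate_derivative_X_pow_mul_X_pow (i j p q : ℕ) :
    derivative^[i] (X ^ p : ℝ[X]) * derivative^[j] (X ^ q : ℝ[X]) =
      C ((p.descFactorial i * q.descFactorial j : ℕ) : ℝ) * X ^ ((p - i) + (q - j)) := by
  rw [iterate_derivative_X_pow_eq_C_mul, iterate_derivative_X_pow_eq_C_mul, pow_add, Nat.cast_mul,
    C_mul]
  ring

lemma descFactorial_mul_descFactorial_eq {p q i j e d : ℕ} (hp : i + e = p) (hq : j + d = q) :
    ((p.descFactorial i * q.descFactorial j : ℕ) : ℝ) =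
      p ! * q ! / (e + d)! * (e + d).choose e := by
  have h₁ := Nat.factorial_mul_descFactorial (show i ≤ p by omega)
  have h₂ := Nat.factorial_mul_descFactorial (show j ≤ q by omega)
  have h₃ := Nat.add_choose_mul_factorial_mul_factorial e d
  rw [show p - i = e by omega] at h₁
  rw [show q - j = d by omega] at h₂
  rw [← Nat.choose_symm_add] at h₃
  rw [← h₁, ← h₂, ← h₃]
  have : ((e + d).choose e : ℝ) ≠ 0 := by
    exact_mod_cast (Nat.choose_pos (Nat.le_add_right e d)).ne'
  push_cast
  field_simp

/-- On a pair of monomials, an alternating quadratic operator with polynomial weight `W` is a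
monomial whose coefficient is a multiple of an iterated forward difference of `W`. -/
lemma sum_smul_iterate_derivative_X_pow (W : ℝ[X]) {n t r p q M : ℕ} (hp : p ≤ n) (hq : q ≤ n)
    (hpq : p + q = t + M) (hrn : r ≤ n) (hrt : r ≤ t)
    (hlow : ∀ a : ℕ, a < n - r → W.eval (a : ℝ) = 0)
    (hhigh : ∀ b : ℕ, b < n - r → W.eval (2 * n - t - b : ℝ) = 0) :
    ∑ i ∈ Finset.Icc (t - r) r, ((-1 : ℝ) ^ i * W.eval (n - i : ℝ)) •
        (derivative^[i] (X ^ p : ℝ[X]) * derivative^[t - i] (X ^ q : ℝ[X])) =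
      C ((-1) ^ (p + M) * (p ! * q ! / M ! : ℝ) * (fwdDiff 1)^[M] (fun x => W.eval x) (n - p : ℝ)) *
        X ^ M := by
  rw [fwdDiff_iter_eq_sum_shift, Finset.mul_sum, map_sum, Finset.sum_mul]
  have key : ∀ i e : ℕ, i + e = p → i ≤ t → e ≤ M →
      ((-1 : ℝ) ^ i * W.eval (n - i : ℝ)) •
        (derivative^[i] (X ^ p : ℝ[X]) * derivative^[t - i] (X ^ q : ℝ[X])) =
      C ((-1) ^ (p + M) * (p ! * q ! / M ! : ℝ) *
        (((-1 : ℤ) ^ (M - e) * M.choose e) • W.eval (n - p + e • 1 : ℝ))) * X ^ M := by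
    intro i e hi hit heM
    obtain ⟨d, rfl⟩ := Nat.exists_eq_add_of_le heM
    rw [iterate_derivative_X_pow_mul_X_pow,
      descFactorial_mul_descFactorial_eq hi (show (t - i) + d = q by omega),
      show p - i + (q - (t - i)) = e + d by omega, smul_eq_C_mul, ← mul_assoc, ← C_mul]
    congr 2
    have h₁ : (n - p + e • 1 : ℝ) = n - i := by
      rw [← hi, nsmul_eq_mul, mul_one, Nat.cast_add]
      ring
    have h₂ : (-1 : ℝ) ^ (p + (e + d)) * (-1) ^ d = (-1) ^ i := by
      rw [← pow_add, ← hi, show i + e + (e + d) + d = i + 2 * (e + d) by ring, pow_add, pow_mul]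
      simp
    rw [h₁, ← h₂, zsmul_eq_mul, Nat.add_sub_cancel_left]
    push_cast
    ring
  have bound : ∀ i, derivative^[i] (X ^ p : ℝ[X]) * derivative^[t - i] (X ^ q : ℝ[X]) ≠ 0 →
      i ≤ p ∧ t - i ≤ q := by
    intro i h
    rw [iterate_derivative_X_pow_mul_X_pow] at h
    by_contra hcon
    apply h
    rcases not_and_or.mp hcon with hc | hc
    · simp [Nat.descFactorial_of_lt (not_le.mp hc)]
    · simp [Nat.descFactorial_of_lt (not_le.mp hc)]
  refine Finset.sum_bij_ne_zero (fun i _ _ => p - i) ?_ ?_ ?_ ?_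
  · intro i hi h
    have := bound i (right_ne_zero_of_smul h)
    rw [Finset.mem_Icc] at hi
    rw [Finset.mem_range]
    omega
  · intro i hi h l hl hne heq
    have := bound i (right_ne_zero_of_smul h)
    have := bound l (right_ne_zero_of_smul hne)
    omega
  · intro e he h
    rw [Finset.mem_range] at he
    have hW : W.eval (n - p + e • 1 : ℝ) ≠ 0 := by
      intro h0
      apply h
      rw [h0]
      simp
    have ha : n - r ≤ (n - p) + e := by
      by_contra hc
      apply hW
      rw [← hlow _ (not_le.mp hc)]
      congr 1
      push_cast [Nat.cast_sub hp]
      simp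
    have hb : n - r ≤ (n - q) + (M - e) := by
      by_contra hc
      apply hW
      rw [← hhigh _ (not_le.mp hc)]
      congr 1
      have : (p : ℝ) + q = t + M := by exact_mod_cast hpq
      push_cast [Nat.cast_sub hq, Nat.cast_sub (Nat.lt_succ_iff.mp he)]
      simp only [mul_one, nsmul_eq_mul]
      linarith
    refine ⟨p - e, Finset.mem_Icc.mpr ⟨by omega, by omega⟩, ?_, by omega⟩
    rw [key (p - e) e (by omega) (by omega) (by omega)]
    exact h
  · intro i hi h
    have := bound i (right_ne_zero_of_smul h)
    rw [Finset.mem_Icc] at hi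
    exact key i (p - i) (by omega) (by omega) (by omega)

/-- An alternating quadratic operator whose polynomial weight has degree `D` lowers every
polynomial of degree at most `n` to degree at most `D`. -/
lemma degree_sum_smul_iterate_derivative_le (W : ℝ[X]) {n t r : ℕ} (hrn : r ≤ n) (hrt : r ≤ t)
    (hlow : ∀ a : ℕ, a < n - r → W.eval (a : ℝ) = 0)
    (hhigh : ∀ b : ℕ, b < n - r → W.eval (2 * n - t - b : ℝ) = 0)
    (f : ℝ[X]) (hf : f.degree ≤ n) :
    (∑ i ∈ Finset.Icc (t - r) r, ((-1 : ℝ) ^ i * W.eval (n - i : ℝ)) •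
        (derivative^[i] f * derivative^[t - i] f)).degree ≤ W.natDegree := by
  have hsum := f.as_sum_range_C_mul_X_pow' (Nat.lt_succ_of_le (natDegree_le_of_degree_le hf))
  have hder (i : ℕ) : derivative^[i] f =
      ∑ p ∈ Finset.range (n + 1), C (f.coeff p) * derivative^[i] (X ^ p) := by
    conv_lhs => rw [hsum]
    rw [iterate_derivative_sum]
    simp only [iterate_derivative_C_mul]
  have hexp : ∑ i ∈ Finset.Icc (t - r) r, ((-1 : ℝ) ^ i * W.eval (n - i : ℝ)) •
        (derivative^[i] f * derivative^[t - i] f) =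
      ∑ p ∈ Finset.range (n + 1), ∑ q ∈ Finset.range (n + 1), (f.coeff p * f.coeff q) •
        ∑ i ∈ Finset.Icc (t - r) r, ((-1 : ℝ) ^ i * W.eval (n - i : ℝ)) •
          (derivative^[i] (X ^ p : ℝ[X]) * derivative^[t - i] (X ^ q : ℝ[X])) := by
    simp only [hder, Finset.sum_mul_sum, Finset.smul_sum]
    rw [Finset.sum_comm]
    refine Finset.sum_congr rfl fun p _ => ?_
    rw [Finset.sum_comm]
    refine Finset.sum_congr rfl fun q _ => Finset.sum_congr rfl fun i _ => ?_
    simp only [smul_eq_C_mul, C_mul]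
    ring
  rw [hexp]
  refine (degree_sum_le _ _).trans (Finset.sup_le fun p hp => ?_)
  refine (degree_sum_le _ _).trans (Finset.sup_le fun q hq => ?_)
  rw [Finset.mem_range] at hp hq
  refine (degree_smul_le _ _).trans ?_
  rcases lt_or_ge (p + q) t with hlt | hge
  · rw [Finset.sum_eq_zero, degree_zero]
    · exact bot_le
    · intro i _
      rw [iterate_derivative_X_pow_mul_X_pow]
      rcases (show p < i ∨ q < t - i by omega) with h | h <;>
        simp [Nat.descFactorial_of_lt h]
  · obtain ⟨M, hM⟩ := Nat.exists_eq_add_of_le hge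
    rw [sum_smul_iterate_derivative_X_pow W (by omega) (by omega) hM hrn hrt hlow hhigh]
    rcases lt_or_ge W.natDegree M with h | h
    · rw [Polynomial.fwdDiff_iter_eq_zero_of_degree_lt h]
      simp
    · exact (degree_C_mul_X_pow_le _ _).trans (by exact_mod_cast h)

/-- The weight polynomial `C(a, s) C(b, s) ((b + 1) + (-1) ^ t (a + 1))` with `a + b = N`, up to
the factor `(s !) ^ 2`. -/
noncomputable def weight (N : ℝ) (s t : ℕ) : ℝ[X] :=
  descPochhammer ℝ s * (descPochhammer ℝ s).comp (C N - X) *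
    ((C N - X + 1) + C ((-1) ^ t) * (X + 1))

lemma natDegree_C_sub_X (N : ℝ) : (C N - X : ℝ[X]).natDegree = 1 := by
  rw [natDegree_sub, natDegree_X_sub_C]

lemma linear_weight_ne_zero_and_natDegree {N : ℝ} (hN : 0 ≤ N) (t : ℕ) :
    ((C N - X + 1) + C ((-1) ^ t) * (X + 1) : ℝ[X]) ≠ 0 ∧
      ((C N - X + 1) + C ((-1) ^ t) * (X + 1) : ℝ[X]).natDegree = t % 2 := by
  rcases Nat.even_or_odd t with h | h
  · rw [h.neg_one_pow, Nat.even_iff.mp h,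
      show (C N - X + 1 + C 1 * (X + 1) : ℝ[X]) = C (N + 2) by
        rw [C_add, C_1, show (C 2 : ℝ[X]) = 2 from rfl]; ring]
    exact ⟨C_ne_zero.mpr (by positivity), natDegree_C _⟩
  · rw [h.neg_one_pow, Nat.odd_iff.mp h,
      show (C N - X + 1 + C (-1) * (X + 1) : ℝ[X]) = C (-2) * X + C N by
        rw [C_neg, C_neg, C_1, show (C 2 : ℝ[X]) = 2 from rfl]; ring]
    have hd := natDegree_linear (b := N) (show (-2 : ℝ) ≠ 0 by norm_num)
    exact ⟨ne_zero_of_natDegree_gt (n := 0) (by omega), hd⟩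

lemma descPochhammer_comp_C_sub_X_ne_zero (N : ℝ) (s : ℕ) :
    (descPochhammer ℝ s).comp (C N - X) ≠ 0 := by
  rw [Ne, comp_eq_zero_iff]
  rintro (h | ⟨-, h⟩)
  · exact (monic_descPochhammer ℝ s).ne_zero h
  · have := natDegree_C_sub_X N
    rw [h, natDegree_C] at this
    omega

lemma weight_ne_zero {N : ℝ} (hN : 0 ≤ N) (s t : ℕ) : weight N s t ≠ 0 :=
  mul_ne_zero (mul_ne_zero (monic_descPochhammer ℝ s).ne_zero
    (descPochhammer_comp_C_sub_X_ne_zero N s)) (linear_weight_ne_zero_and_natDegree hN t).1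

lemma natDegree_weight {N : ℝ} (hN : 0 ≤ N) (s t : ℕ) :
    (weight N s t).natDegree = 2 * s + t % 2 := by
  have hs := (monic_descPochhammer ℝ s).ne_zero
  have hcomp := descPochhammer_comp_C_sub_X_ne_zero N s
  obtain ⟨hlin, hdeg⟩ := linear_weight_ne_zero_and_natDegree hN t
  rw [weight, natDegree_mul (mul_ne_zero hs hcomp) hlin, natDegree_mul hs hcomp, hdeg,
    natDegree_comp, natDegree_C_sub_X, descPochhammer_natDegree]
  ring

lemma eval_weight {N : ℝ} {a b : ℕ} (h : (a + b : ℝ) = N) (s t : ℕ) :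
    (weight N s t).eval (a : ℝ) = (s ! : ℝ) ^ 2 * (s + 1) *
      ((b + 1).choose (s + 1) * a.choose s + (-1) ^ t * ((a + 1).choose (s + 1) * b.choose s)) := by
  have hb : N - a = b := by linarith
  have hch (c : ℕ) : ((c + 1 : ℕ) : ℝ) * c.choose s = (c + 1).choose (s + 1) * ((s + 1 : ℕ) : ℝ) := by
    exact_mod_cast Nat.add_one_mul_choose_eq c s
  have h₁ := hch a
  have h₂ := hch b
  push_cast at h₁ h₂
  simp only [weight, eval_mul, eval_comp, eval_sub, eval_add, eval_C, eval_X, eval_one, hb,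
    descPochhammer_eval_eq_descFactorial, Nat.descFactorial_eq_factorial_mul_choose, Nat.cast_mul]
  linear_combination (s ! : ℝ) ^ 2 * (a.choose s * h₂ + (-1) ^ t * b.choose s * h₁)

lemma eval_weight_eq_zero_of_lt (N : ℝ) (t : ℕ) {a s : ℕ} (h : a < s) :
    (weight N s t).eval (a : ℝ) = 0 := by
  simp [weight, descPochhammer_eval_eq_descFactorial, Nat.descFactorial_of_lt h]

lemma eval_weight_sub_eq_zero_of_lt (N : ℝ) (t : ℕ) {b s : ℕ} (h : b < s) :
    (weight N s t).eval (N - b : ℝ) = 0 := by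
  simp [weight, descPochhammer_eval_eq_descFactorial, Nat.descFactorial_of_lt h]

/-- The coefficients of the operator may be symmetrized under `i ↦ t - i`, which turns them into
values of `weight`. -/
lemma sum_smul_iterate_derivative_eq_weight {n t r : ℕ} (hrn : r ≤ n) (hrt : r ≤ t) (f : ℝ[X]) :
    ∑ i ∈ Finset.Icc (t - r) r,
        ((-1 : ℝ) ^ i * ((n - (t - i) + 1).choose (n - r + 1) : ℝ) * ((n - i).choose (n - r) : ℝ)) •
          (derivative^[i] f * derivative^[t - i] f) =
      (2 * ((n - r)! : ℝ) ^ 2 * ((n - r : ℕ) + 1))⁻¹ •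
        ∑ i ∈ Finset.Icc (t - r) r, ((-1 : ℝ) ^ i * (weight (2 * n - t) (n - r) t).eval (n - i : ℝ)) •
          (derivative^[i] f * derivative^[t - i] f) := by
  set s := n - r with hs
  set c : ℕ → ℝ := fun i =>
    (-1 : ℝ) ^ i * ((n - (t - i) + 1).choose (s + 1) : ℝ) * ((n - i).choose s : ℝ) with hc
  have hne : (2 * (s ! : ℝ) ^ 2 * (s + 1)) ≠ 0 := by positivity
  have hflip : ∑ i ∈ Finset.Icc (t - r) r, c i • (derivative^[i] f * derivative^[t - i] f) =
      ∑ i ∈ Finset.Icc (t - r) r, c (t - i) • (derivative^[i] f * derivative^[t - i] f) := by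
    refine Finset.sum_nbij' (fun i => t - i) (fun i => t - i) ?_ ?_ ?_ ?_ ?_ <;>
      intro i hi <;> simp only [Finset.mem_Icc] at hi ⊢
    · omega
    · omega
    · omega
    · omega
    · rw [show t - (t - i) = i by omega, mul_comm (derivative^[i] f)]
  rw [eq_inv_smul_iff₀ hne, mul_assoc, mul_smul, two_smul, ← smul_add]
  nth_rewrite 2 [hflip]
  rw [← Finset.sum_add_distrib, Finset.smul_sum]
  refine Finset.sum_congr rfl fun i hi => ?_
  rw [Finset.mem_Icc] at hi
  rw [← add_smul, smul_smul]
  congr 1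
  have hin : ((n - i : ℕ) : ℝ) = n - i := Nat.cast_sub (by omega)
  have hjn : ((n - (t - i) : ℕ) : ℝ) = n - (t - i) := by
    rw [Nat.cast_sub (by omega), Nat.cast_sub (by omega)]
  have hsign : (-1 : ℝ) ^ (t - i) = (-1) ^ i * (-1) ^ t := by
    obtain ⟨j, rfl⟩ := Nat.exists_eq_add_of_le (show i ≤ t by omega)
    rw [Nat.add_sub_cancel_left, pow_add, ← mul_assoc, ← mul_pow]
    simp
  rw [← hin, eval_weight (b := n - (t - i)) (by rw [hin, hjn]; ring)]
  simp only [hc, show t - (t - i) = i by omega, hsign]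
  ring

end QuadraticAutonomous

/-- Fix `n ≥ 1` and `−n ≤ k ≤ n`; let `t = n + k`,
`r_min = ⌈(n+k)/2⌉`, `r_max = min(n, n+k)`, and for `r_min ≤ r ≤ r_max` let
`m(k,r) = k + 2(r − r_min)`.  The quadratic autonomous operator
`Q_{k,r}[f] = ∑_{i=n+k−r}^{r} (−1)^i C(i−k+1, n−r+1) C(n−i, n−r) f^{(i)} f^{(n+k−i)}`
maps every `f ∈ P_n` into `P_{n−m(k,r)}`, and attains degree exactly `n − m(k,r)` on
some `f ∈ P_n`: it has monomial deficiency `k`, order `r`, and deficiency exactly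
`m(k,r)` relative to `P_n`. -/
theorem quadratic_autonomous_deficiency (n : ℕ) (hn : 1 ≤ n)
    (k : ℤ) (hk1 : -(n : ℤ) ≤ k) (hk2 : k ≤ (n : ℤ))
    (t rmin rmax : ℕ) (ht : (t : ℤ) = (n : ℤ) + k)
    (hrmin : rmin = (t + 1) / 2) (hrmax : rmax = min n t)
    (r : ℕ) (hr1 : rmin ≤ r) (hr2 : r ≤ rmax)
    (mkr : ℤ) (hmkr : mkr = k + 2 * ((r : ℤ) - (rmin : ℤ)))
    (Qkr : ℝ[X] → ℝ[X])
    (hQkr : ∀ f : ℝ[X], Qkr f =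
      ∑ i ∈ Finset.Icc (t - r) r,
        ((-1 : ℝ) ^ i * ((((i : ℤ) - k + 1).toNat.choose (n - r + 1) : ℕ) : ℝ) *
          (((n - i).choose (n - r) : ℕ) : ℝ)) •
          (derivative^[i] f * derivative^[((n : ℤ) + k - (i : ℤ)).toNat] f)) :
    (∀ f : ℝ[X], f.degree ≤ (n : WithBot ℕ) →
      (Qkr f).degree ≤ ((((n : ℤ) - mkr).toNat : ℕ) : WithBot ℕ)) ∧
    ∃ f : ℝ[X], f.degree ≤ (n : WithBot ℕ) ∧
      (Qkr f).degree = ((((n : ℤ) - mkr).toNat : ℕ) : WithBot ℕ) := by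
  have hrn : r ≤ n := by omega
  have hrt : r ≤ t := by omega
  have hlow : ∀ a : ℕ, a < n - r →
      (QuadraticAutonomous.weight (2 * n - t) (n - r) t).eval (a : ℝ) = 0 :=
    fun a ha => QuadraticAutonomous.eval_weight_eq_zero_of_lt _ t ha
  have hhigh : ∀ b : ℕ, b < n - r →
      (QuadraticAutonomous.weight (2 * n - t) (n - r) t).eval (2 * n - t - b : ℝ) = 0 :=
    fun b hb => QuadraticAutonomous.eval_weight_sub_eq_zero_of_lt _ t hb
  have hN : (0 : ℝ) ≤ 2 * n - t := by
    rw [sub_nonneg]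
    exact_mod_cast (show t ≤ 2 * n by omega)
  have hdeg : (QuadraticAutonomous.weight (2 * n - t) (n - r) t).natDegree =
      ((n : ℤ) - mkr).toNat := by
    rw [QuadraticAutonomous.natDegree_weight hN]
    omega
  have hQ : ∀ f : ℝ[X], Qkr f = (2 * ((n - r)! : ℝ) ^ 2 * ((n - r : ℕ) + 1))⁻¹ •
      ∑ i ∈ Finset.Icc (t - r) r, ((-1 : ℝ) ^ i *
        (QuadraticAutonomous.weight (2 * n - t) (n - r) t).eval (n - i : ℝ)) •
          (derivative^[i] f * derivative^[t - i] f) := by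
    intro f
    rw [hQkr, ← QuadraticAutonomous.sum_smul_iterate_derivative_eq_weight hrn hrt]
    refine Finset.sum_congr rfl fun i hi => ?_
    rw [Finset.mem_Icc] at hi
    rw [show ((i : ℤ) - k + 1).toNat = n - (t - i) + 1 by omega,
      show ((n : ℤ) + k - (i : ℤ)).toNat = t - i by omega]
  have hunit : IsSMulRegular ℝ (2 * ((n - r)! : ℝ) ^ 2 * ((n - r : ℕ) + 1))⁻¹ :=
    (IsUnit.mk0 _ (by positivity)).isSMulRegular ℝ
  refine ⟨fun f hf => ?_, X ^ (rmin + (n - r)), ?_, ?_⟩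
  · rw [hQ, ← hdeg]
    exact (degree_smul_le _ _).trans
      (QuadraticAutonomous.degree_sum_smul_iterate_derivative_le _ hrn hrt hlow hhigh f hf)
  · rw [degree_X_pow]
    exact_mod_cast (show rmin + (n - r) ≤ n by omega)
  · rw [hQ, degree_smul_of_smul_regular _ hunit,
      QuadraticAutonomous.sum_smul_iterate_derivative_X_pow _ (by omega) (by omega)
        (show rmin + (n - r) + (rmin + (n - r)) = t + ((n : ℤ) - mkr).toNat by omega)
        hrn hrt hlow hhigh, ← hdeg]
    refine degree_C_mul_X_pow _ (mul_ne_zero (mul_ne_zero ?_ ?_) ?_)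
    · exact pow_ne_zero _ (by norm_num)
    · positivity
    · rw [Polynomial.fwdDiff_iter_degree_eq_factorial]
      simp [QuadraticAutonomous.weight_ne_zero hN, Nat.factorial_ne_zero]
end
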